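/- Corollary 'opscoincide'(ii): suppose b is divergence free with respect to B. Then (a) for every f ∈ 𝒞 the element U(j f) = f•b belongs to D(∂_B*) and ∂_B^⊥(j f) = U^{-1}(∂f); in particular j(𝒞) ⊆ D(∂_B^⊥) and ∂_B^⊥(j 1) = 0; and (b) ∂_B^⊥ is skew-symmetric on j(𝒞_B): ⟨∂_B^⊥(j f), j g⟩_{H₀} = −⟨j f, ∂_B^⊥(j g)⟩_{H₀} for all f, g ∈ 𝒞_B. -/

import Mathlib

open RealInnerProductSpace ContinuousMap

set_option synthInstance.maxHeartbeats 1000000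
set_option maxHeartbeats 1000000

/-!
For `φ` vanishing on `B`, so does `f * φ`, hence `b` is orthogonal to
`∂(f * φ) = f • ∂φ + φ • ∂f`. Moving the symmetric action to the other side of the inner product
gives `⟪f • b, ∂φ⟫ = -⟪φ • b, ∂f⟫`. Since `f • b = U (j f)`, this identity exhibits `-U⁻¹(∂f)` as
the adjoint value at `U (j f)`, and, read symmetrically in `f` and `φ`, it is the skew-symmetry.
-/

theorem leibniz_map_one {A V : Type*} [MulOneClass A] [AddGroup V] {act : A → V → V} {d : A → V}
    (hact_one : ∀ v, act 1 v = v)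
    (hLeibniz : ∀ f g, d (f * g) = act f (d g) + act g (d f)) : d 1 = 0 := by
  simpa only [mul_one, hact_one, left_eq_add] using hLeibniz 1 1

section Duality

variable {A H H₀ : Type*} [Semiring A]
  [NormedAddCommGroup H] [InnerProductSpace ℝ H]
  [NormedAddCommGroup H₀] [InnerProductSpace ℝ H₀]
  {I : Ideal A} {act : A → H → H} {d : A → H} {j : A → H₀} {b : H}

/-- The vector `b` is divergence free with respect to an ideal `I` of test functions (the functions
vanishing on `B`, in the paper's setting): it is orthogonal to the differentials `d φ`, `φ ∈ I`. -/
def IsDivergenceFree (I : Ideal A) (d : A → H) (b : H) : Prop :=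
  ∀ φ ∈ I, ⟪b, d φ⟫ = 0

/-- The graph of the adjoint of the operator `j φ ↦ d φ`, `φ ∈ I`: the vector `v` is in its domain
and `w` is a value there. A relation rather than a function, since `w` is unique only if `j(I)`
spans a dense subspace. -/
def HasAdjointValue (I : Ideal A) (d : A → H) (j : A → H₀) (v : H) (w : H₀) : Prop :=
  ∀ φ ∈ I, ⟪v, d φ⟫ = ⟪w, j φ⟫

theorem IsDivergenceFree.inner_act_eq_neg
    (hact_symm : ∀ f v w, ⟪act f v, w⟫ = ⟪v, act f w⟫)
    (hLeibniz : ∀ f g, d (f * g) = act f (d g) + act g (d f))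
    (hb : IsDivergenceFree I d b) (f : A) {φ : A} (hφ : φ ∈ I) :
    ⟪act f b, d φ⟫ = -⟪act φ b, d f⟫ := by
  rw [eq_neg_iff_add_eq_zero]
  calc ⟪act f b, d φ⟫ + ⟪act φ b, d f⟫
      = ⟪b, d (f * φ)⟫ := by rw [hact_symm, hact_symm, hLeibniz, inner_add_right]
    _ = 0 := hb _ (I.mul_mem_left f hφ)

theorem HasAdjointValue.inner_neg_left_eq_neg_inner_neg_right {f g : A} {v v' : H} {w w' : H₀}
    (hv : HasAdjointValue I d j v w) (hv' : HasAdjointValue I d j v' w')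
    (hf : f ∈ I) (hg : g ∈ I) (hskew : ⟪v, d g⟫ = -⟪v', d f⟫) :
    ⟪-w, j g⟫ = -⟪j f, -w'⟫ := by
  calc ⟪-w, j g⟫ = -⟪v, d g⟫ := by rw [inner_neg_left, hv g hg]
    _ = ⟪v', d f⟫ := by rw [hskew, neg_neg]
    _ = -⟪j f, -w'⟫ := by rw [hv' f hf, inner_neg_right, neg_neg, real_inner_comm]

theorem IsDivergenceFree.hasAdjointValue
    (hact_symm : ∀ f v w, ⟪act f v, w⟫ = ⟪v, act f w⟫)
    (hLeibniz : ∀ f g, d (f * g) = act f (d g) + act g (d f))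
    (hb : IsDivergenceFree I d b) {U : H₀ ≃ₗᵢ[ℝ] H} (hU : ∀ f, U (j f) = act f b) (f : A) :
    HasAdjointValue I d j (U (j f)) (-U.symm (d f)) := fun φ hφ ↦
  calc ⟪U (j f), d φ⟫ = -⟪U (j φ), d f⟫ := by
        rw [hU, hU, hb.inner_act_eq_neg hact_symm hLeibniz f hφ]
    _ = ⟪-U.symm (d f), j φ⟫ := by rw [U.inner_map_eq_flip, inner_neg_left, real_inner_comm]

theorem stmt_4_general
    (hact_one : ∀ v, act 1 v = v)
    (hact_symm : ∀ f v w, ⟪act f v, w⟫ = ⟪v, act f w⟫)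
    (hLeibniz : ∀ f g, d (f * g) = act f (d g) + act g (d f))
    (hb : IsDivergenceFree I d b) {U : H₀ ≃ₗᵢ[ℝ] H} (hU : ∀ f, U (j f) = act f b) :
    (∀ f, HasAdjointValue I d j (U (j f)) (-U.symm (d f))) ∧
    HasAdjointValue I d j (U (j 1)) 0 ∧
    ∀ f g, f ∈ I → g ∈ I → ∀ wf wg,
      HasAdjointValue I d j (U (j f)) wf → HasAdjointValue I d j (U (j g)) wg →
      ⟪-wf, j g⟫ = -⟪j f, -wg⟫ := by
  have hadj := hb.hasAdjointValue hact_symm hLeibniz hU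
  refine ⟨hadj, ?_, fun f g hf hg wf wg hwf hwg ↦ ?_⟩
  · simpa only [leibniz_map_one hact_one hLeibniz, map_zero, neg_zero] using hadj 1
  · refine hwf.inner_neg_left_eq_neg_inner_neg_right hwg hf hg ?_
    rw [hU, hU, hb.inner_act_eq_neg hact_symm hLeibniz f hg]

end Duality

/-- The ideal `𝒞_B` of the functions in `𝒞` that vanish on `B`. Given by its carrier, so that
membership unfolds to pointwise vanishing. -/
def vanishingIdeal {X : Type*} [TopologicalSpace X] (𝒞 : Subalgebra ℝ C(X, ℝ)) (B : Set X) :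
    Ideal 𝒞 where
  carrier := {f | ∀ x ∈ B, (f : C(X, ℝ)) x = 0}
  zero_mem' _ _ := rfl
  add_mem' hf hg x hx := by simp [hf x hx, hg x hx]
  smul_mem' f g hg x hx := by simp [hg x hx]

/-- **Corollary `opscoincide`(ii)**: suppose `b` is divergence free with respect to `B`.
Then (a) for every `f ∈ 𝒞` the element `U(j f) = f•b` belongs to `D(∂_B*)` and
`∂_B^⊥(j f) = U⁻¹(∂f)` (equivalently `∂_B*(U(j f)) = −U⁻¹(∂f)`, expressed below through the
defining adjoint relation, whose value is unique by density of `j(𝒞_B)`); in particular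
`∂_B^⊥(j 1) = 0`; and (b) `∂_B^⊥` is skew-symmetric on `j(𝒞_B)`. -/
theorem stmt_4
    {X : Type*} [TopologicalSpace X]
    {H : Type*} [NormedAddCommGroup H] [InnerProductSpace ℝ H] [CompleteSpace H]
    {H₀ : Type*} [NormedAddCommGroup H₀] [InnerProductSpace ℝ H₀] [CompleteSpace H₀]
    (𝒞 : Subalgebra ℝ C(X, ℝ))
    (act : 𝒞 →ₗ[ℝ] H →ₗ[ℝ] H)
    (hact_one : ∀ v : H, act 1 v = v)
    (hact_symm : ∀ (f : 𝒞) (v w : H), ⟪act f v, w⟫ = ⟪v, act f w⟫)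
    (hact_bound : ∀ (f : 𝒞) (M : ℝ), (∀ x : X, |(f : C(X, ℝ)) x| ≤ M) →
      ∀ v : H, ‖act f v‖ ≤ M * ‖v‖)
    (par : 𝒞 →ₗ[ℝ] H)
    (hLeibniz : ∀ f g : 𝒞, par (f * g) = act f (par g) + act g (par f))
    (B : Set X) (hB : IsClosed B)
    (b : H) (hbne : b ≠ 0)
    (hdivfree : ∀ φ : 𝒞, (∀ x ∈ B, (φ : C(X, ℝ)) x = 0) → ⟪b, par φ⟫ = 0)
    (j : 𝒞 →ₗ[ℝ] H₀) (hjinj : Function.Injective j)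
    (hjdense : Dense (⇑j '' {f : 𝒞 | ∀ x ∈ B, (f : C(X, ℝ)) x = 0}))
    (U : H₀ ≃ₗᵢ[ℝ] H) (hU : ∀ f : 𝒞, U (j f) = act f b) :
    -- (a) `U (j f) ∈ D(∂_B*)` with `∂_B*(U (j f)) = −U⁻¹(∂ f)`, i.e. `∂_B^⊥(j f) = U⁻¹(∂ f)`
    (∀ f : 𝒞, ∀ φ : 𝒞, (∀ x ∈ B, (φ : C(X, ℝ)) x = 0) →
        ⟪U (j f), par φ⟫ = ⟪-(U.symm (par f)), j φ⟫) ∧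
    -- in particular `j 1 ∈ D(∂_B^⊥)` with `∂_B^⊥(j 1) = 0`
    (∀ φ : 𝒞, (∀ x ∈ B, (φ : C(X, ℝ)) x = 0) → ⟪U (j 1), par φ⟫ = (0 : ℝ)) ∧
    -- (b) skew-symmetry on `j(𝒞_B)`: with `∂_B^⊥(j f) = −wf` and `∂_B^⊥(j g) = −wg`, where
    -- `wf, wg` are the (unique) adjoint values, `⟨∂_B^⊥(j f), j g⟩ = −⟨j f, ∂_B^⊥(j g)⟩`
    (∀ f g : 𝒞, (∀ x ∈ B, (f : C(X, ℝ)) x = 0) → (∀ x ∈ B, (g : C(X, ℝ)) x = 0) →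
      ∀ wf wg : H₀,
        (∀ φ : 𝒞, (∀ x ∈ B, (φ : C(X, ℝ)) x = 0) → ⟪U (j f), par φ⟫ = ⟪wf, j φ⟫) →
        (∀ φ : 𝒞, (∀ x ∈ B, (φ : C(X, ℝ)) x = 0) → ⟪U (j g), par φ⟫ = ⟪wg, j φ⟫) →
        ⟪-wf, j g⟫ = -⟪j f, -wg⟫) := by
  obtain ⟨hadj, hone, hskew⟩ :=
    stmt_4_general (I := vanishingIdeal 𝒞 B) hact_one hact_symm hLeibniz hdivfree hU
  exact ⟨hadj, fun φ hφ ↦ (hone φ hφ).trans (inner_zero_left _), hskew⟩
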